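/- For every even integer n ≥ 6 there exist an even positive definite lattice L of rank n (i.e. a symmetric positive definite integer Gram matrix S of size n with even diagonal entries) and a holomorphic Jacobi form φ of singular weight n/2 and index 1 for L with completely trivial character (trivial SL₂(ℤ)-character and trivial Heisenberg character) which is not identically zero. -/

import Mathlib

open Complex Matrix
open scoped Real BigOperators Classical

noncomputable section

abbrev SL2Z := Matrix.SpecialLinearGroup (Fin 2) ℤ

/-- The integral bilinear form attached to a Gram matrix `S`. -/
def bilinZ {ι : Type*} [Fintype ι] (S : Matrix ι ι ℤ) (x y : ι → ℤ) : ℤ :=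
  ∑ i, ∑ j, x i * S i j * y j

def bilinQ {ι : Type*} [Fintype ι] (S : Matrix ι ι ℤ) (x y : ι → ℚ) : ℚ :=
  ∑ i, ∑ j, x i * (S i j : ℚ) * y j

def bilinR {ι : Type*} [Fintype ι] (S : Matrix ι ι ℤ) (x y : ι → ℝ) : ℝ :=
  ∑ i, ∑ j, x i * (S i j : ℝ) * y j

def bilinC {ι : Type*} [Fintype ι] (S : Matrix ι ι ℤ) (x y : ι → ℂ) : ℂ :=
  ∑ i, ∑ j, x i * (S i j : ℂ) * y j

/-- `S` is the Gram matrix of an even positive definite lattice. -/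
structure IsEvenPosDef {ι : Type*} [Fintype ι] (S : Matrix ι ι ℤ) : Prop where
  symm : S.IsSymm
  posdef : ∀ x : ι → ℚ, x ≠ 0 → 0 < bilinQ S x x
  even_diag : ∀ i, (2 : ℤ) ∣ S i i

/-- `l ∈ (1/2) L^∨`, written in lattice coordinates:  `2(l,x) ∈ ℤ` for every lattice vector. -/
def InHalfDual {ι : Type*} [Fintype ι] (S : Matrix ι ι ℤ) (l : ι → ℚ) : Prop :=
  ∀ x : ι → ℤ, ∃ m : ℤ, 2 * bilinQ S l (fun i => (x i : ℚ)) = m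

/-- `φ` is a holomorphic Jacobi form of weight `k` and index `t` for the lattice `(ℤ^ι, S)`
with `SL₂(ℤ)`-character (multiplier system) `χ`, Heisenberg character `ν`,
and Fourier coefficients `f`. -/
structure IsJacobiForm {ι : Type*} [Fintype ι] (S : Matrix ι ι ℤ) (k t : ℚ)
    (χ : SL2Z → ℂ) (ν : (ι → ℤ) → (ι → ℤ) → ℂ)
    (f : ℚ × (ι → ℚ) → ℂ) (φ : ℂ → (ι → ℂ) → ℂ) : Prop where
  holo : DifferentiableOn ℂ (fun p : ℂ × (ι → ℂ) => φ p.1 p.2) {p | 0 < p.1.im}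
  modular : ∀ A : SL2Z, ∀ τ : ℂ, 0 < τ.im → ∀ z : ι → ℂ,
    φ (((A.1 0 0 : ℂ) * τ + (A.1 0 1 : ℂ)) / ((A.1 1 0 : ℂ) * τ + (A.1 1 1 : ℂ)))
        (fun i => z i / ((A.1 1 0 : ℂ) * τ + (A.1 1 1 : ℂ)))
      = χ A * ((A.1 1 0 : ℂ) * τ + (A.1 1 1 : ℂ)) ^ (k : ℂ)
        * Complex.exp ((π : ℂ) * I * (t : ℂ) * (A.1 1 0 : ℂ) * bilinC S z z
            / ((A.1 1 0 : ℂ) * τ + (A.1 1 1 : ℂ)))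
        * φ τ z
  elliptic : ∀ x y : ι → ℤ, ∀ τ : ℂ, 0 < τ.im → ∀ z : ι → ℂ,
    φ τ (fun i => z i + (x i : ℂ) * τ + (y i : ℂ))
      = ν x y * Complex.exp (-((π : ℂ) * I * (t : ℂ))
            * ((bilinZ S x x : ℂ) * τ + 2 * bilinC S (fun i => (x i : ℂ)) z))
        * φ τ z
  support : ∀ p : ℚ × (ι → ℚ), f p ≠ 0 →
    0 ≤ p.1 ∧ InHalfDual S p.2 ∧ 0 ≤ 2 * p.1 * t - bilinQ S p.2 p.2
  expansion : ∀ τ : ℂ, 0 < τ.im → ∀ z : ι → ℂ,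
    HasSum (fun p : ℚ × (ι → ℚ) =>
        f p * Complex.exp (2 * (π : ℂ) * I *
          ((p.1 : ℂ) * τ + bilinC S (fun i => (p.2 i : ℂ)) z))) (φ τ z)

/-- The Fourier coefficients `f` are supported on indices of positive hyperbolic norm
(cusp form condition). -/
def IsCuspSupport {ι : Type*} [Fintype ι] (S : Matrix ι ι ℤ) (t : ℚ)
    (f : ℚ × (ι → ℚ) → ℂ) : Prop :=
  ∀ p : ℚ × (ι → ℚ), f p ≠ 0 → 0 < 2 * p.1 * t - bilinQ S p.2 p.2

/-- `c` is a root of unity. -/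
def HasFiniteOrder (c : ℂ) : Prop := ∃ N : ℕ, 0 < N ∧ c ^ N = 1

/-!
The theta functions of the diagonal lattice `⨁_i ⟨N i⟩`, indexed by its discriminant group,
transform under the Weil representation. Hence a function on the discriminant group whose support
lies on the isotropic elements, and which is an eigenvector of the Fourier transform for the right
eigenvalue, pairs with them to a Jacobi form of singular weight with trivial character. If the
function is not zero, neither is the form, because the theta functions are linearly independent.

Such functions arise as tensor products of eigenvectors with nontrivial characters. An odd function
on the discriminant group of `⟨2⟩ ⊕ ⟨6⟩`, a sublattice of index two of `A₂`, is an eigenvector in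
rank two. The odd character modulo `4` and the even character modulo `12`, each taken twice, form
one in rank four. On the support of both, the quadratic form is constant, equal to `1 / 3` modulo
`1`, so any three of them multiply to a function with isotropic support. This gives the ranks 6, 8
and 10, and multiplying by further such functions of rank 6 gives all other even ranks.
-/

theorem hasSum_prod_mul {𝕜 : Type*} [RCLike 𝕜] {α β : Type*} {f : α → 𝕜} {g : β → 𝕜} {a b : 𝕜}
    (hf : HasSum f a) (hg : HasSum g b) : HasSum (fun p : α × β => f p.1 * g p.2) (a * b) := by
  have hs : Summable (fun p : α × β => f p.1 * g p.2) :=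
    summable_mul_of_summable_norm hf.summable.norm hg.summable.norm
  exact hf.mul hg hs

theorem hasSum_pi_prod {𝕜 : Type*} [RCLike 𝕜] {ι : Type*} [Fintype ι] {κ : ι → Type*}
    {f : ∀ i, κ i → 𝕜} {a : ι → 𝕜} (h : ∀ i, HasSum (f i) (a i)) :
    HasSum (fun l : ∀ i, κ i => ∏ i, f i (l i)) (∏ i, a i) := by
  suffices hfin : ∀ {n : ℕ} {κ : Fin n → Type _} {f : ∀ i, κ i → 𝕜} {a : Fin n → 𝕜},
      (∀ i, HasSum (f i) (a i)) → HasSum (fun l : ∀ i, κ i => ∏ i, f i (l i)) (∏ i, a i) by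
    let e := (Fintype.equivFin ι).symm
    rw [← (Equiv.piCongrLeft κ e).hasSum_iff, ← e.prod_comp]
    convert hfin fun i => h (e i) using 2 with l
    rw [Function.comp_apply, ← e.prod_comp]
    simp only [Equiv.piCongrLeft_apply_apply]
  intro n
  induction n with
  | zero =>
    intro κ f a _
    simp
  | succ n ih =>
    intro κ f a h
    rw [← (Fin.consEquiv κ).hasSum_iff, Fin.prod_univ_succ]
    convert hasSum_prod_mul (h 0) (ih fun i => h i.succ) using 2 with p
    simp [Fin.prod_univ_succ, Fin.consEquiv]

/-- The term `exp (2πi(l²τ/2N + lz))` of a theta series of the lattice `⟨N⟩`, that is, `ℤ` with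
bilinear form `Nxy`: it is attached to the dual vector `l / N`, so `l` runs over `ℤ`. -/
def thetaTerm (N : ℕ) (l : ℤ) (τ z : ℂ) : ℂ :=
  exp (2 * π * I * (l ^ 2 * τ / (2 * N) + l * z))

/-- The theta function of the coset `r` in the discriminant group `ZMod N` of the lattice `⟨N⟩`,
i.e. the sum of `thetaTerm N l` over all `l ≡ r` modulo `N`, written in terms of Jacobi's
two-variable theta function. -/
def residueTheta (N : ℕ) (r : ZMod N) (τ z : ℂ) : ℂ :=
  thetaTerm N r.val τ z * jacobiTheta₂ (r.val * τ + N * z) (N * τ)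

/-- The value `exp (2πi r²/2N)` of the discriminant quadratic form of `⟨N⟩` on a coset `r`. It is
independent of the representative of `r` for even `N`. -/
def gaussPhase (N : ℕ) (r : ZMod N) : ℂ :=
  exp (2 * π * I * ((r.val : ℂ) ^ 2 / (2 * N)))

section OneDimensional

variable {N : ℕ} [NeZero N]

theorem natCast_mul_im_pos (N : ℕ) [NeZero N] {τ : ℂ} (hτ : 0 < τ.im) : 0 < ((N : ℂ) * τ).im := by
  simpa using mul_pos (Nat.cast_pos.2 (NeZero.pos N)) hτ

theorem stdAddChar_mul_intCast (r : ZMod N) (l : ℤ) :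
    ZMod.stdAddChar (r * (l : ZMod N)) = exp (2 * π * I * (r.val * l / N)) := by
  conv_lhs => rw [← ZMod.natCast_zmod_val r, ← Int.cast_natCast, ← Int.cast_mul,
    ZMod.stdAddChar_coe]
  push_cast
  ring_nf

theorem gaussPhase_intCast (hN : Even N) (l : ℤ) :
    gaussPhase N (l : ZMod N) = exp (2 * π * I * ((l : ℂ) ^ 2 / (2 * N))) := by
  obtain ⟨q, hq⟩ := (ZMod.intCast_eq_iff N l l).1 rfl
  obtain ⟨M, rfl⟩ := hN.two_dvd
  have hM0 : (M : ℂ) ≠ 0 := by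
    have := NeZero.ne ((2 * M : ℕ) : ℂ)
    simp_all
  rw [gaussPhase, eq_comm, exp_eq_exp_iff_exists_int]
  generalize (l : ZMod (2 * M)).val = v at hq
  refine ⟨v * q + M * q ^ 2, ?_⟩
  rw [hq]
  push_cast
  field_simp
  ring

theorem thetaTerm_add_one (hN : Even N) (l : ℤ) (τ z : ℂ) :
    thetaTerm N l (τ + 1) z = gaussPhase N (l : ZMod N) * thetaTerm N l τ z := by
  rw [gaussPhase_intCast hN, thetaTerm, thetaTerm, ← exp_add]
  ring_nf

theorem thetaTerm_add_div (l y : ℤ) (τ z : ℂ) :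
    thetaTerm N l τ (z + y / N) =
      ZMod.stdAddChar ((l : ZMod N) * (y : ZMod N)) * thetaTerm N l τ z := by
  rw [← Int.cast_mul, ZMod.stdAddChar_coe, thetaTerm, thetaTerm, ← exp_add]
  push_cast
  ring_nf

theorem thetaTerm_add_mul (l x : ℤ) (τ z : ℂ) :
    thetaTerm N l τ (z + x * τ) =
      exp (-(π * I * (N * x ^ 2 * τ + 2 * (N * x * z)))) * thetaTerm N (l + N * x) τ z := by
  have hN : (N : ℂ) ≠ 0 := NeZero.ne _
  rw [thetaTerm, thetaTerm, ← exp_add]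
  congr 1
  push_cast
  field_simp
  ring

theorem hasSum_residueTheta (r : ZMod N) {τ : ℂ} (hτ : 0 < τ.im) (z : ℂ) :
    HasSum (fun l : ℤ => if (l : ZMod N) = r then thetaTerm N l τ z else 0)
      (residueTheta N r τ z) := by
  have hN : (N : ℂ) ≠ 0 := NeZero.ne _
  have hinj : Function.Injective fun q : ℤ => (r.val : ℤ) + N * q := fun a b hab => by
    simpa [NeZero.ne N] using hab
  rw [← hinj.hasSum_iff]
  · refine ((hasSum_jacobiTheta₂_term (r.val * τ + N * z)
      (natCast_mul_im_pos N hτ)).mul_left (thetaTerm N r.val τ z)).congr_fun fun q => ?_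
    rw [Function.comp_apply, if_pos ((ZMod.intCast_eq_iff N _ r).2 ⟨q, rfl⟩), jacobiTheta₂_term,
      thetaTerm, thetaTerm, ← exp_add]
    congr 1
    push_cast
    field_simp
    ring
  · intro l hl
    refine if_neg fun hlr => hl ?_
    obtain ⟨q, hq⟩ := (ZMod.intCast_eq_iff N l r).1 hlr
    exact ⟨q, hq.symm⟩

theorem residueTheta_add_one (hN : Even N) (r : ZMod N) {τ : ℂ} (hτ : 0 < τ.im) (z : ℂ) :
    residueTheta N r (τ + 1) z = gaussPhase N r * residueTheta N r τ z := by
  have hτ1 : 0 < (τ + 1).im := by simpa using hτ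
  refine (hasSum_residueTheta r hτ1 z).unique <|
    ((hasSum_residueTheta r hτ z).mul_left _).congr_fun fun l => ?_
  split_ifs with hl
  · rw [thetaTerm_add_one hN, hl]
  · rw [mul_zero]

theorem residueTheta_add_div (r : ZMod N) (y : ℤ) {τ : ℂ} (hτ : 0 < τ.im) (z : ℂ) :
    residueTheta N r τ (z + y / N) =
      ZMod.stdAddChar (r * (y : ZMod N)) * residueTheta N r τ z := by
  refine (hasSum_residueTheta r hτ _).unique <|
    ((hasSum_residueTheta r hτ z).mul_left _).congr_fun fun l => ?_
  split_ifs with hl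
  · rw [thetaTerm_add_div, hl]
  · rw [mul_zero]

theorem residueTheta_add_intCast (r : ZMod N) (y : ℤ) {τ : ℂ} (hτ : 0 < τ.im) (z : ℂ) :
    residueTheta N r τ (z + y) = residueTheta N r τ z := by
  have hN : (N : ℂ) ≠ 0 := NeZero.ne _
  simpa [hN] using residueTheta_add_div r (N * y) hτ z

theorem residueTheta_add_mul (r : ZMod N) (x : ℤ) {τ : ℂ} (hτ : 0 < τ.im) (z : ℂ) :
    residueTheta N r τ (z + x * τ) =
      exp (-(π * I * (N * x ^ 2 * τ + 2 * (N * x * z)))) * residueTheta N r τ z := by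
  have hshift := (Equiv.addRight (N * x : ℤ)).hasSum_iff.2 (hasSum_residueTheta r hτ z)
  refine (hasSum_residueTheta r hτ _).unique <| (hshift.mul_left _).congr_fun fun l => ?_
  simp [thetaTerm_add_mul]

theorem jacobiTheta₂_sub_div_eq_sum_residueTheta (r : ZMod N) {τ : ℂ} (hτ : 0 < τ.im) (z : ℂ) :
    jacobiTheta₂ (z - r.val / N) (τ / N) =
      ∑ s, ZMod.stdAddChar (-(r * s)) * residueTheta N s τ z := by
  have hτN : 0 < (τ / N).im := by
    simpa using div_pos hτ (Nat.cast_pos.2 (NeZero.pos N))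
  refine (hasSum_jacobiTheta₂_term _ hτN).unique <| HasSum.congr_fun (hasSum_sum fun s _ =>
    (hasSum_residueTheta s hτ z).mul_left (ZMod.stdAddChar (-(r * s)))) fun l => ?_
  simp only [mul_ite, mul_zero, Finset.sum_ite_eq, Finset.mem_univ, if_true]
  rw [AddChar.map_neg_eq_inv, stdAddChar_mul_intCast, jacobiTheta₂_term, thetaTerm, ← exp_neg,
    ← exp_add]
  ring_nf

theorem residueTheta_neg_one_div (r : ZMod N) {τ : ℂ} (hτ : 0 < τ.im) (z : ℂ) :
    residueTheta N r (-1 / τ) (z / τ) = (-I * (τ / N)) ^ (1 / 2 : ℂ) *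
      exp (π * I * N * z ^ 2 / τ) * ∑ s, ZMod.stdAddChar (-(r * s)) * residueTheta N s τ z := by
  have hN : (N : ℂ) ≠ 0 := NeZero.ne _
  have hτ0 : τ ≠ 0 := by rintro rfl; simp at hτ
  have hfactor : (-I * (τ / N)) ^ (1 / 2 : ℂ) ≠ 0 := by simp [hτ0, hN]
  have hz : (z - r.val / N) / (τ / N) = r.val * (-1 / τ) + N * (z / τ) := by field_simp; ring
  have hτN : -1 / (τ / N) = N * (-1 / τ) := by field_simp
  have hexp : thetaTerm N r.val (-1 / τ) (z / τ) =
      exp (π * I * N * z ^ 2 / τ) * exp (-π * I * (z - r.val / N) ^ 2 / (τ / N)) := by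
    rw [thetaTerm, ← exp_add]
    congr 1
    push_cast
    field_simp
    ring
  rw [← jacobiTheta₂_sub_div_eq_sum_residueTheta r hτ z, jacobiTheta₂_functional_equation,
    residueTheta, hexp, hz, hτN]
  generalize (-I * (τ / N)) ^ (1 / 2 : ℂ) = w at hfactor
  field_simp

theorem differentiableAt_residueTheta (r : ZMod N) {p : ℂ × ℂ} (hp : 0 < p.1.im) :
    DifferentiableAt ℂ (fun q : ℂ × ℂ => residueTheta N r q.1 q.2) p := by
  have htheta := (hasFDerivAt_jacobiTheta₂ (r.val * p.1 + N * p.2)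
    (natCast_mul_im_pos N hp)).differentiableAt
  refine DifferentiableAt.mul (by unfold thetaTerm; fun_prop) ?_
  exact htheta.comp p (f := fun q : ℂ × ℂ => (r.val * q.1 + N * q.2, N * q.1)) (by fun_prop)

theorem jacobiTheta_ne_zero {τ : ℂ} (hτ : 1 ≤ τ.im) : jacobiTheta τ ≠ 0 := by
  intro hzero
  have hexp : rexp (-π * τ.im) < 1 / 4 := by
    have hπ : 4 < rexp (π * τ.im) := by nlinarith [Real.add_one_le_exp (π * τ.im), Real.pi_gt_three]
    rw [neg_mul, Real.exp_neg, one_div]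
    exact inv_strictAnti₀ (by norm_num) hπ
  have hnorm := norm_jacobiTheta_sub_one_le (zero_lt_one.trans_le hτ)
  rw [hzero, zero_sub, norm_neg, norm_one, div_mul_eq_mul_div, one_le_div (by linarith)] at hnorm
  linarith

theorem exists_residueTheta_ne_zero (r : ZMod N) : ∃ z, residueTheta N r I z ≠ 0 := by
  have hN : (N : ℂ) ≠ 0 := NeZero.ne _
  refine ⟨-(r.val * I / N), mul_ne_zero (exp_ne_zero _) ?_⟩
  have hzero : (r.val * I + N * -(r.val * I / N) : ℂ) = 0 := by field_simp; ring
  rw [hzero, ← jacobiTheta_eq_jacobiTheta₂]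
  refine jacobiTheta_ne_zero ?_
  simpa using Nat.one_le_iff_ne_zero.2 (NeZero.ne N)

end OneDimensional

section DiscriminantGroup

variable {ι : Type*} [Fintype ι] {N : ι → ℕ}

/-- The theta function `∑_r c(r) ∏_i ϑ_{r_i}(τ, z_i)` of the lattice `⨁_i ⟨N i⟩` whose
coefficients are given by a function `c` on the discriminant group `∏_i ZMod (N i)`. -/
def discTheta [DecidableEq ι] [∀ i, NeZero (N i)] (c : (∀ i, ZMod (N i)) → ℂ) (τ : ℂ)
    (z : ι → ℂ) : ℂ :=
  ∑ r, c r * ∏ i, residueTheta (N i) (r i) τ (z i)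

/-- The unnormalised Fourier transform on the discriminant group `∏_i ZMod (N i)`. -/
def discFourier [DecidableEq ι] [∀ i, NeZero (N i)] (c : (∀ i, ZMod (N i)) → ℂ)
    (s : ∀ i, ZMod (N i)) : ℂ :=
  ∑ r, c r * ∏ i, ZMod.stdAddChar (-(r i * s i))

variable [DecidableEq ι] [∀ i, NeZero (N i)]

theorem sum_prod_stdAddChar_mul (r : ∀ i, ZMod (N i)) :
    ∑ s : ∀ i, ZMod (N i), ∏ i, ZMod.stdAddChar (s i * r i) =
      if r = 0 then ∏ i, (N i : ℂ) else 0 := by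
  have hswap := Finset.prod_univ_sum (fun i => (Finset.univ : Finset (ZMod (N i))))
    fun i s => ZMod.stdAddChar (s * r i)
  rw [Fintype.piFinset_univ] at hswap
  simp only [← hswap, AddChar.sum_mulShift _ (ZMod.isPrimitive_stdAddChar _), ZMod.card,
    Finset.prod_ite_zero, Finset.mem_univ, true_implies, funext_iff, Pi.zero_apply, Nat.cast_ite,
    Nat.cast_zero]

theorem sum_discFourier_mul (c : (∀ i, ZMod (N i)) → ℂ) (r : ∀ i, ZMod (N i)) :
    ∑ s, discFourier c s * ∏ i, ZMod.stdAddChar (s i * r i) = (∏ i, (N i : ℂ)) * c r := by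
  simp only [discFourier, Finset.sum_mul]
  rw [Finset.sum_comm]
  have hinner : ∀ u : ∀ i, ZMod (N i), ∑ s : ∀ i, ZMod (N i),
      c u * (∏ i, ZMod.stdAddChar (-(u i * s i))) * ∏ i, ZMod.stdAddChar (s i * r i) =
        if r = u then (∏ i, (N i : ℂ)) * c u else 0 := by
    intro u
    have hrow := congrArg (c u * ·) (sum_prod_stdAddChar_mul (r - u))
    simp only [Finset.mul_sum, sub_eq_zero, mul_ite, mul_zero] at hrow
    rw [mul_comm _ (c u), ← hrow]
    refine Finset.sum_congr rfl fun s _ => ?_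
    rw [mul_assoc, ← Finset.prod_mul_distrib]
    have hexponent : ∀ i, -(u i * s i) + s i * r i = s i * (r - u) i := fun i => by
      rw [Pi.sub_apply]
      ring
    simp only [← AddChar.map_add_eq_mul, hexponent]
  simp only [hinner, Finset.sum_ite_eq, Finset.mem_univ, if_true]

theorem eq_zero_of_discFourier_eq_zero {c : (∀ i, ZMod (N i)) → ℂ}
    (h : ∀ s, discFourier c s = 0) : c = 0 := by
  funext r
  have hN : ∏ i, (N i : ℂ) ≠ 0 := Finset.prod_ne_zero_iff.2 fun i _ => NeZero.ne _
  simpa [h, hN] using (sum_discFourier_mul c r).symm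

theorem hasSum_discTheta (c : (∀ i, ZMod (N i)) → ℂ) {τ : ℂ} (hτ : 0 < τ.im) (z : ι → ℂ) :
    HasSum (fun l : ι → ℤ => c (fun i => l i) * ∏ i, thetaTerm (N i) (l i) τ (z i))
      (discTheta c τ z) := by
  refine HasSum.congr_fun (hasSum_sum fun r _ =>
    (hasSum_pi_prod fun i => hasSum_residueTheta (r i) hτ (z i)).mul_left (c r)) fun l => ?_
  have hcoset : ∀ r : ∀ i, ZMod (N i),
      (∀ i, (l i : ZMod (N i)) = r i) ↔ (fun i => (l i : ZMod (N i))) = r :=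
    fun r => funext_iff.symm
  simp only [Finset.prod_ite_zero, Finset.mem_univ, true_implies, hcoset, mul_ite, mul_zero,
    Finset.sum_ite_eq, if_true]

theorem discTheta_add_one (hN : ∀ i, Even (N i)) {c : (∀ i, ZMod (N i)) → ℂ} {t : ℂ}
    (hc : ∀ r, c r ≠ 0 → ∏ i, gaussPhase (N i) (r i) = t) {τ : ℂ} (hτ : 0 < τ.im) (z : ι → ℂ) :
    discTheta c (τ + 1) z = t * discTheta c τ z := by
  simp only [discTheta, Finset.mul_sum, residueTheta_add_one (hN _) _ hτ,
    Finset.prod_mul_distrib]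
  refine Finset.sum_congr rfl fun r _ => ?_
  by_cases hr : c r = 0
  · simp only [hr, zero_mul, mul_zero]
  · rw [hc r hr]
    ring

theorem discTheta_add_intCast (c : (∀ i, ZMod (N i)) → ℂ) (y : ι → ℤ) {τ : ℂ} (hτ : 0 < τ.im)
    (z : ι → ℂ) : discTheta c τ (fun i => z i + y i) = discTheta c τ z := by
  simp only [discTheta, residueTheta_add_intCast _ _ hτ]

theorem discTheta_add_mul (c : (∀ i, ZMod (N i)) → ℂ) (x : ι → ℤ) {τ : ℂ} (hτ : 0 < τ.im)
    (z : ι → ℂ) :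
    discTheta c τ (fun i => z i + x i * τ) =
      exp (-(π * I * ∑ i, (N i * x i ^ 2 * τ + 2 * (N i * x i * z i)))) * discTheta c τ z := by
  simp only [discTheta, residueTheta_add_mul _ _ hτ, Finset.prod_mul_distrib, ← exp_sum,
    Finset.sum_neg_distrib, ← Finset.mul_sum, mul_left_comm (c _)]

theorem discTheta_neg_one_div (c : (∀ i, ZMod (N i)) → ℂ) {τ : ℂ} (hτ : 0 < τ.im) (z : ι → ℂ) :
    discTheta c (-1 / τ) (fun i => z i / τ) =
      (∏ i, (-I * (τ / N i)) ^ (1 / 2 : ℂ)) * exp (π * I * (∑ i, N i * z i ^ 2) / τ) *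
        discTheta (discFourier c) τ z := by
  have hexp : ∏ i, exp (π * I * N i * z i ^ 2 / τ) = exp (π * I * (∑ i, N i * z i ^ 2) / τ) := by
    simp only [← exp_sum, Finset.mul_sum, Finset.sum_div, mul_assoc]
  simp only [discTheta, residueTheta_neg_one_div _ hτ, Finset.prod_mul_distrib, hexp,
    Finset.prod_univ_sum, Fintype.piFinset_univ, mul_left_comm (c _), ← Finset.mul_sum,
    discFourier, Finset.sum_mul]
  rw [Finset.sum_comm]
  simp only [mul_assoc, Finset.mul_sum]

theorem differentiableOn_discTheta (c : (∀ i, ZMod (N i)) → ℂ) :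
    DifferentiableOn ℂ (fun p : ℂ × (ι → ℂ) => discTheta c p.1 p.2) {p | 0 < p.1.im} := by
  intro p hp
  have hfactor : ∀ (r : ∀ i, ZMod (N i)) (i : ι),
      DifferentiableAt ℂ (fun q : ℂ × (ι → ℂ) => residueTheta (N i) (r i) q.1 (q.2 i)) p :=
    fun r i => (differentiableAt_residueTheta (r i) (p := (p.1, p.2 i)) hp).comp p
      (f := fun q : ℂ × (ι → ℂ) => (q.1, q.2 i)) (by fun_prop)
  refine (DifferentiableAt.fun_sum fun r _ => ?_).differentiableWithinAt
  exact (HasFDerivAt.finsetProd fun i _ =>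
    (hfactor r i).hasFDerivAt).differentiableAt.const_mul (c r)

theorem exists_discTheta_ne_zero {c : (∀ i, ZMod (N i)) → ℂ} (hc : c ≠ 0) :
    ∃ z, discTheta c I z ≠ 0 := by
  by_contra! hzero
  obtain ⟨r₀, hr₀⟩ := Function.ne_iff.1 hc
  choose z hz using fun i => exists_residueTheta_ne_zero (r₀ i)
  have hfourier : ∀ s,
      discFourier (fun r => c r * ∏ i, residueTheta (N i) (r i) I (z i)) s = 0 := by
    intro s
    rw [← hzero fun i => z i + (-(s i).val : ℤ) / N i]
    simp only [discFourier, discTheta, residueTheta_add_div _ _ (show 0 < I.im by simp),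
      Finset.prod_mul_distrib]
    refine Finset.sum_congr rfl fun r _ => ?_
    simp only [Int.cast_neg, Int.cast_natCast, ZMod.natCast_zmod_val, mul_neg]
    ring
  have := congrFun (eq_zero_of_discFourier_eq_zero hfourier) r₀
  simp_all [Finset.prod_eq_zero_iff]

end DiscriminantGroup

section ModularGroup

open UpperHalfPlane hiding I

variable {ι : Type*} [Fintype ι] (Q : Matrix ι ι ℤ) (k : ℤ)

theorem denom_mul (A B : SL2Z) (τ : ℍ) :
    denom (A * B : SL2Z) τ = denom A (B • τ : ℍ) * denom B τ := by
  rw [ModularGroup.sl_moeb, coe_smul_of_det_pos (by simp), ← denom_cocycle _ _ τ.im_ne_zero,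
    map_mul, map_mul]

theorem lowerLeft_mul_denom (A B : SL2Z) (τ : ℍ) :
    ((A * B).1 1 0 : ℂ) * denom B τ = A.1 1 0 + B.1 1 0 * denom (A * B : SL2Z) τ := by
  have hentry : ∀ j, ((A * B).1 1 j : ℂ) = A.1 1 0 * B.1 0 j + A.1 1 1 * B.1 1 j := fun j => by
    simp [Matrix.mul_apply, Fin.sum_univ_two]
  have hdet : (B.1 0 0 * B.1 1 1 - B.1 0 1 * B.1 1 0 : ℂ) = 1 := by
    exact_mod_cast (Matrix.det_fin_two B.1).symm.trans B.2
  simp only [ModularGroup.denom_apply, hentry]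
  linear_combination (A.1 1 0 : ℂ) * hdet

theorem bilinC_div_div (z : ι → ℂ) (w : ℂ) :
    bilinC Q (fun i => z i / w) (fun i => z i / w) = bilinC Q z z / w ^ 2 := by
  simp only [bilinC, Finset.sum_div]
  refine Finset.sum_congr rfl fun i _ => Finset.sum_congr rfl fun j _ => ?_
  ring

/-- The automorphy factor of Jacobi forms of weight `k` and index `1` for the lattice with Gram
matrix `Q`. -/
def jacobiFactor (A : SL2Z) (τ : ℍ) (z : ι → ℂ) : ℂ :=
  denom A τ ^ k * exp (π * I * A.1 1 0 * bilinC Q z z / denom A τ)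

theorem jacobiFactor_mul (A B : SL2Z) (τ : ℍ) (z : ι → ℂ) :
    jacobiFactor Q k (A * B) τ z =
      jacobiFactor Q k A (B • τ) (fun i => z i / denom B τ) * jacobiFactor Q k B τ z := by
  have hA : denom A (B • τ : ℍ) ≠ 0 := denom_ne_zero A _
  have hB : denom B τ ≠ 0 := denom_ne_zero B τ
  have hc := lowerLeft_mul_denom A B τ
  have hexp : π * I * (A * B).1 1 0 * bilinC Q z z / (denom A (B • τ : ℍ) * denom B τ) =
      π * I * A.1 1 0 * (bilinC Q z z / denom B τ ^ 2) / denom A (B • τ : ℍ) +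
        π * I * B.1 1 0 * bilinC Q z z / denom B τ := by
    rw [denom_mul] at hc
    field_simp
    linear_combination bilinC Q z z * hc
  rw [jacobiFactor, jacobiFactor, jacobiFactor, denom_mul, mul_zpow, bilinC_div_div, hexp, exp_add]
  ring

theorem jacobiFactor_one (τ : ℍ) (z : ι → ℂ) : jacobiFactor Q k 1 τ z = 1 := by
  simp [jacobiFactor]

/-- The subgroup of those modular substitutions under which `φ` transforms like a Jacobi form of
weight `k` and index `1` with trivial character. -/
def jacobiStabilizer (φ : ℂ → (ι → ℂ) → ℂ) : Subgroup SL2Z where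
  carrier := {A | ∀ (τ : ℍ) (z : ι → ℂ),
    φ (A • τ : ℍ) (fun i => z i / denom A τ) = jacobiFactor Q k A τ z * φ τ z}
  one_mem' τ z := by simp [jacobiFactor_one]
  mul_mem' {A B} hA hB τ z := by
    have hz : (fun i => z i / denom (A * B : SL2Z) τ) =
        fun i => z i / denom B τ / denom A (B • τ : ℍ) := by
      funext i
      rw [denom_mul, div_div, mul_comm]
    rw [hz, mul_smul, hA, hB, jacobiFactor_mul, mul_assoc]
  inv_mem' {A} hA τ z := by
    have hdenom := denom_mul A A⁻¹ τ
    have hfactor := jacobiFactor_mul Q k A A⁻¹ τ z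
    have hlaw := hA (A⁻¹ • τ) fun i => z i / denom (A⁻¹ : SL2Z) τ
    simp only [mul_inv_cancel, smul_inv_smul, jacobiFactor_one, div_div, map_one, denom_one,
      mul_comm (denom (A⁻¹ : SL2Z) τ), ← hdenom, div_one] at hdenom hfactor hlaw
    rw [hlaw]
    linear_combination φ (A⁻¹ • τ : ℍ) (fun i => z i / denom (A⁻¹ : SL2Z) τ) * hfactor

variable {Q k}

theorem S_mem_jacobiStabilizer {φ : ℂ → (ι → ℂ) → ℂ}
    (hS : ∀ τ : ℂ, 0 < τ.im → ∀ z : ι → ℂ,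
      φ (-1 / τ) (fun i => z i / τ) = τ ^ k * exp (π * I * bilinC Q z z / τ) * φ τ z) :
    ModularGroup.S ∈ jacobiStabilizer Q k φ := by
  intro τ z
  have hentry : ((ModularGroup.S.1 1 0 : ℤ) : ℂ) = 1 := by simp [ModularGroup.S]
  have hsmul : ((ModularGroup.S • τ : ℍ) : ℂ) = -1 / τ := by
    rw [modular_S_smul]
    simp [neg_div, inv_neg]
  rw [jacobiFactor, hentry, mul_one, ModularGroup.denom_S, hsmul]
  exact hS τ τ.im_pos z

theorem T_mem_jacobiStabilizer {φ : ℂ → (ι → ℂ) → ℂ}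
    (hT : ∀ τ : ℂ, 0 < τ.im → ∀ z : ι → ℂ, φ (τ + 1) z = φ τ z) :
    ModularGroup.T ∈ jacobiStabilizer Q k φ := by
  intro τ z
  have hsmul : ((ModularGroup.T • τ : ℍ) : ℂ) = τ + 1 := by
    rw [modular_T_smul]
    simp [add_comm]
  have hdenom : denom ModularGroup.T τ = 1 := by
    rw [ModularGroup.denom_apply]
    simp [ModularGroup.T]
  have hentry : ((ModularGroup.T.1 1 0 : ℤ) : ℂ) = 0 := by simp [ModularGroup.T]
  rw [jacobiFactor, hsmul, hdenom, hentry]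
  simpa using hT τ τ.im_pos z

theorem jacobi_modular_of_S_T {φ : ℂ → (ι → ℂ) → ℂ}
    (hS : ∀ τ : ℂ, 0 < τ.im → ∀ z : ι → ℂ,
      φ (-1 / τ) (fun i => z i / τ) = τ ^ k * exp (π * I * bilinC Q z z / τ) * φ τ z)
    (hT : ∀ τ : ℂ, 0 < τ.im → ∀ z : ι → ℂ, φ (τ + 1) z = φ τ z)
    (A : SL2Z) {τ : ℂ} (hτ : 0 < τ.im) (z : ι → ℂ) :
    φ ((A.1 0 0 * τ + A.1 0 1) / (A.1 1 0 * τ + A.1 1 1))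
        (fun i => z i / (A.1 1 0 * τ + A.1 1 1)) =
      (A.1 1 0 * τ + A.1 1 1) ^ k *
        exp (π * I * A.1 1 0 * bilinC Q z z / (A.1 1 0 * τ + A.1 1 1)) * φ τ z := by
  have htop : jacobiStabilizer Q k φ = ⊤ := by
    rw [eq_top_iff, ← SpecialLinearGroup.SL2Z_generators, Subgroup.closure_le, Set.pair_subset_iff]
    exact ⟨S_mem_jacobiStabilizer hS, T_mem_jacobiStabilizer hT⟩
  have hA : A ∈ jacobiStabilizer Q k φ := htop ▸ Subgroup.mem_top A
  lift τ to ℍ using hτ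
  have hlaw := hA τ z
  rw [coe_specialLinearGroup_apply] at hlaw
  simpa only [jacobiFactor, ModularGroup.denom_apply, algebraMap_int_eq, eq_intCast,
    ofReal_intCast] using hlaw

end ModularGroup

section WeilEigenvector

variable {ι : Type*} [Fintype ι] {N : ι → ℕ} [∀ i, NeZero (N i)]

theorem cpow_half_mul_natCast (n : ℕ) [NeZero n] {w : ℂ} (hw : w ≠ 0) :
    (n * w) ^ (1 / 2 : ℂ) = √n * w ^ (1 / 2 : ℂ) := by
  have hn : (0 : ℝ) < n := Nat.cast_pos.2 (NeZero.pos n)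
  rw [Real.sqrt_eq_rpow, ofReal_cpow hn.le, cpow_def_of_ne_zero hw,
    cpow_def_of_ne_zero (ofReal_ne_zero.2 hn.ne'),
    cpow_def_of_ne_zero (mul_ne_zero (NeZero.ne _) hw), ← ofReal_natCast, log_ofReal_mul hn hw,
    ofReal_log hn.le, ← exp_add]
  push_cast
  ring_nf

theorem prod_cpow_half_mul_prod_sqrt {k : ℕ} (hcard : Fintype.card ι = 2 * k) {τ : ℂ} (hτ : τ ≠ 0) :
    (∏ i, (-I * (τ / N i)) ^ (1 / 2 : ℂ)) * ∏ i, (√(N i) : ℂ) = (-I * τ) ^ k := by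
  have hfactor : ∀ i, (-I * (τ / N i)) ^ (1 / 2 : ℂ) * √(N i) = (-I * τ) ^ (1 / 2 : ℂ) := by
    intro i
    have hN : (N i : ℂ) ≠ 0 := NeZero.ne _
    rw [mul_comm, ← cpow_half_mul_natCast (N i) (by simp [hτ, hN])]
    congr 1
    field_simp
  rw [← Finset.prod_mul_distrib, Finset.prod_congr rfl fun i _ => hfactor i, Finset.prod_const,
    Finset.card_univ, hcard, pow_mul, ← cpow_nat_mul]
  norm_num

variable [DecidableEq ι] {t s : ℂ} {c : (∀ i, ZMod (N i)) → ℂ}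

/-- `c` is a common eigenvector of the generators of the Weil representation of the discriminant
group of `⨁_i ⟨N i⟩`: multiplication by the discriminant quadratic form acts by `t`, the unitary
Fourier transform by `s`. -/
structure IsWeilEigenvector (N : ι → ℕ) [∀ i, NeZero (N i)] (t s : ℂ)
    (c : (∀ i, ZMod (N i)) → ℂ) : Prop where
  gaussPhase_eq : ∀ r, c r ≠ 0 → ∏ i, gaussPhase (N i) (r i) = t
  discFourier_eq : ∀ u, discFourier c u = s * (∏ i, (√(N i) : ℂ)) * c u

namespace IsWeilEigenvector

theorem discTheta_neg_one_div (h : IsWeilEigenvector N t s c) {k : ℕ}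
    (hcard : Fintype.card ι = 2 * k) {τ : ℂ} (hτ : 0 < τ.im) (z : ι → ℂ) :
    discTheta c (-1 / τ) (fun i => z i / τ) =
      s * (-I * τ) ^ k * exp (π * I * (∑ i, N i * z i ^ 2) / τ) * discTheta c τ z := by
  have hτ0 : τ ≠ 0 := by rintro rfl; simp at hτ
  have hfourier : discTheta (discFourier c) τ z = (s * ∏ i, (√(N i) : ℂ)) * discTheta c τ z := by
    simp only [discTheta, h.discFourier_eq, Finset.mul_sum, mul_assoc]
  rw [_root_.discTheta_neg_one_div c hτ, hfourier,
    ← prod_cpow_half_mul_prod_sqrt (N := N) hcard hτ0]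
  ring

end IsWeilEigenvector

end WeilEigenvector

section DiagonalLattice

variable {ι : Type*} [Fintype ι] {N : ι → ℕ}

/-- The position `((v, v) / 2, v)` of the term of a theta function of `⨁_i ⟨N i⟩` at the dual
vector `v = (l i / N i)_i`. -/
def fourierIndex (N : ι → ℕ) (l : ι → ℤ) : ℚ × (ι → ℚ) :=
  (∑ i, (l i : ℚ) ^ 2 / (2 * N i), fun i => l i / N i)

section FourierIndex

variable [∀ i, NeZero (N i)]

theorem fourierIndex_injective : Function.Injective (fourierIndex N) := fun l l' h => by
  funext i
  have hN : (N i : ℚ) ≠ 0 := NeZero.ne _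
  simpa [fourierIndex, div_left_inj' hN] using congrFun (congrArg Prod.snd h) i

theorem exists_intCast_eq_fourierIndex_fst (hN : ∀ i, Even (N i)) {l : ι → ℤ}
    (hl : ∏ i, gaussPhase (N i) (l i) = 1) : ∃ m : ℤ, (fourierIndex N l).1 = m := by
  simp only [gaussPhase_intCast (hN _), ← exp_sum, ← Finset.mul_sum] at hl
  obtain ⟨m, hm⟩ := exp_eq_one_iff.1 hl
  refine ⟨m, ?_⟩
  rw [mul_comm, mul_left_inj' two_pi_I_ne_zero] at hm
  simp only [fourierIndex]
  exact_mod_cast hm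

/-- The Fourier coefficients of `discTheta c`. -/
def discCoeff (c : (∀ i, ZMod (N i)) → ℂ) : ℚ × (ι → ℚ) → ℂ :=
  Function.extend (fourierIndex N) (fun l => c fun i => l i) 0

theorem exists_fourierIndex_eq_of_discCoeff_ne_zero {c : (∀ i, ZMod (N i)) → ℂ} {p : ℚ × (ι → ℚ)}
    (hp : discCoeff c p ≠ 0) : ∃ l : ι → ℤ, fourierIndex N l = p ∧ c (fun i => l i) ≠ 0 := by
  by_cases h : ∃ l, fourierIndex N l = p
  · obtain ⟨l, rfl⟩ := h
    rw [discCoeff, fourierIndex_injective.extend_apply] at hp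
    exact ⟨l, rfl, hp⟩
  · exact absurd (Function.extend_apply' _ _ _ h) hp

end FourierIndex

variable [DecidableEq ι]

/-- The Gram matrix of the lattice `⨁_i ⟨N i⟩`. -/
def diagGram (N : ι → ℕ) : Matrix ι ι ℤ :=
  diagonal fun i => (N i : ℤ)

theorem bilinZ_diagGram (x y : ι → ℤ) : bilinZ (diagGram N) x y = ∑ i, N i * (x i * y i) := by
  simp [bilinZ, diagGram, diagonal_apply, mul_left_comm, mul_assoc]

theorem bilinQ_diagGram (x y : ι → ℚ) : bilinQ (diagGram N) x y = ∑ i, N i * (x i * y i) := by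
  simp [bilinQ, diagGram, diagonal_apply, mul_left_comm, mul_assoc]

theorem bilinC_diagGram (x y : ι → ℂ) : bilinC (diagGram N) x y = ∑ i, N i * (x i * y i) := by
  simp [bilinC, diagGram, diagonal_apply, mul_left_comm, mul_assoc]

variable [∀ i, NeZero (N i)]

theorem isEvenPosDef_diagGram (hN : ∀ i, Even (N i)) : IsEvenPosDef (diagGram N) where
  symm := isSymm_diagonal _
  posdef x hx := by
    obtain ⟨i, hi⟩ := Function.ne_iff.1 hx
    have hpos : ∀ j, (0 : ℚ) < N j := fun j => Nat.cast_pos.2 (NeZero.pos (N j))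
    rw [bilinQ_diagGram]
    exact Finset.sum_pos' (fun j _ => mul_nonneg (hpos j).le (mul_self_nonneg _))
      ⟨i, Finset.mem_univ i, mul_pos (hpos i) (mul_self_pos.2 hi)⟩
  even_diag i := by
    simpa [diagGram] using Int.natCast_dvd_natCast.2 (hN i).two_dvd

theorem hasSum_discCoeff (c : (∀ i, ZMod (N i)) → ℂ) {τ : ℂ} (hτ : 0 < τ.im) (z : ι → ℂ) :
    HasSum (fun p : ℚ × (ι → ℚ) => discCoeff c p * exp (2 * π * I *
      (p.1 * τ + bilinC (diagGram N) (fun i => p.2 i) z))) (discTheta c τ z) := by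
  rw [← (fourierIndex_injective (N := N)).hasSum_iff]
  · refine (hasSum_discTheta c hτ z).congr_fun fun l => ?_
    have hN : ∀ i, (N i : ℂ) ≠ 0 := fun i => NeZero.ne _
    rw [Function.comp_apply, discCoeff, fourierIndex_injective.extend_apply, bilinC_diagGram]
    simp only [thetaTerm, ← exp_sum, ← Finset.mul_sum, fourierIndex, Finset.sum_add_distrib]
    push_cast
    rw [Finset.sum_mul]
    congr 5 <;> funext i
    · ring
    · field_simp [hN i]
  · intro p hp
    rw [discCoeff, Function.extend_apply' _ _ _ hp, Pi.zero_apply, zero_mul]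

theorem exists_intCast_eq_bilinQ_fourierIndex (l x : ι → ℤ) :
    ∃ m : ℤ, bilinQ (diagGram N) (fourierIndex N l).2 (fun i => x i) = m := by
  have hN : ∀ i, (N i : ℚ) ≠ 0 := fun i => NeZero.ne _
  refine ⟨∑ i, l i * x i, ?_⟩
  rw [bilinQ_diagGram]
  push_cast
  exact Finset.sum_congr rfl fun i _ => by
    simp only [fourierIndex]
    field_simp [hN i]

theorem bilinQ_fourierIndex_self (l : ι → ℤ) :
    bilinQ (diagGram N) (fourierIndex N l).2 (fourierIndex N l).2 = 2 * (fourierIndex N l).1 := by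
  have hN : ∀ i, (N i : ℚ) ≠ 0 := fun i => NeZero.ne _
  rw [bilinQ_diagGram, fourierIndex, Finset.mul_sum]
  exact Finset.sum_congr rfl fun i _ => by field_simp [hN i]

theorem IsWeilEigenvector.isJacobiForm {k : ℕ} {c : (∀ i, ZMod (N i)) → ℂ}
    (h : IsWeilEigenvector N 1 (I ^ k) c) (hcard : Fintype.card ι = 2 * k)
    (hN : ∀ i, Even (N i)) :
    IsJacobiForm (diagGram N) k 1 (fun _ => 1) (fun _ _ => 1) (discCoeff c) (discTheta c) where
  holo := differentiableOn_discTheta c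
  modular A τ hτ z := by
    have hS : ∀ τ : ℂ, 0 < τ.im → ∀ z : ι → ℂ, discTheta c (-1 / τ) (fun i => z i / τ) =
        τ ^ (k : ℤ) * exp (π * I * bilinC (diagGram N) z z / τ) * discTheta c τ z := by
      intro τ hτ z
      rw [h.discTheta_neg_one_div hcard hτ, ← mul_pow, bilinC_diagGram, zpow_natCast]
      simp only [← mul_assoc, mul_neg, I_mul_I, neg_neg, one_mul, sq]
    have hT : ∀ τ : ℂ, 0 < τ.im → ∀ z : ι → ℂ, discTheta c (τ + 1) z = discTheta c τ z :=
      fun τ hτ z => by rw [discTheta_add_one hN h.gaussPhase_eq hτ, one_mul]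
    simpa using jacobi_modular_of_S_T hS hT A hτ z
  elliptic x y τ hτ z := by
    rw [discTheta_add_intCast c y hτ, discTheta_add_mul c x hτ, bilinZ_diagGram, bilinC_diagGram]
    push_cast
    simp only [Finset.sum_add_distrib, Finset.sum_mul, Finset.mul_sum, one_mul, mul_one, sq,
      mul_assoc, neg_mul]
  support p hp := by
    obtain ⟨l, rfl, -⟩ := exists_fourierIndex_eq_of_discCoeff_ne_zero hp
    refine ⟨Finset.sum_nonneg fun i _ => by positivity, fun x => ?_, ?_⟩
    · obtain ⟨m, hm⟩ := exists_intCast_eq_bilinQ_fourierIndex (N := N) l x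
      exact ⟨2 * m, by rw [hm]; push_cast; rfl⟩
    · rw [bilinQ_fourierIndex_self (N := N)]
      simp
  expansion τ hτ z := hasSum_discCoeff c hτ z

end DiagonalLattice

section TensorProduct

variable {ι κ : Type*} [Fintype ι] [DecidableEq ι] [Fintype κ] [DecidableEq κ] {t s t' s' : ℂ}

instance neZero_sumElim {M : ι → ℕ} {N : κ → ℕ} [hM : ∀ i, NeZero (M i)] [hN : ∀ j, NeZero (N j)]
    (i : ι ⊕ κ) : NeZero (Sum.elim M N i) :=
  i.rec hM hN

/-- The discriminant group of an orthogonal sum of lattices is the product of the discriminant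
groups. -/
def discSumEquiv (M : ι → ℕ) (N : κ → ℕ) :
    (∀ i, ZMod (Sum.elim M N i)) ≃ (∀ i, ZMod (M i)) × ∀ j, ZMod (N j) :=
  Equiv.sumPiEquivProdPi fun i => ZMod (Sum.elim M N i)

namespace IsWeilEigenvector

theorem reindex {N : ι → ℕ} [∀ i, NeZero (N i)] {c : (∀ i, ZMod (N i)) → ℂ}
    (h : IsWeilEigenvector N t s c) (e : κ ≃ ι) :
    IsWeilEigenvector (fun j => N (e j)) t s
      fun r => c (Equiv.piCongrLeft (fun i => ZMod (N i)) e r) where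
  gaussPhase_eq r hr := by
    rw [← h.gaussPhase_eq _ hr, ← e.prod_comp]
    simp only [Equiv.piCongrLeft_apply_apply]
  discFourier_eq u := by
    rw [e.prod_comp fun i => (√(N i) : ℂ), ← h.discFourier_eq]
    refine Fintype.sum_equiv (Equiv.piCongrLeft (fun i => ZMod (N i)) e) _ _ fun r => ?_
    rw [← e.prod_comp]
    simp only [Equiv.piCongrLeft_apply_apply]

theorem tensor {M : ι → ℕ} [∀ i, NeZero (M i)] {N : κ → ℕ} [∀ j, NeZero (N j)]
    {c : (∀ i, ZMod (M i)) → ℂ} {d : (∀ j, ZMod (N j)) → ℂ}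
    (hc : IsWeilEigenvector M t s c) (hd : IsWeilEigenvector N t' s' d) :
    IsWeilEigenvector (Sum.elim M N) (t * t') (s * s')
      fun r => c (discSumEquiv M N r).1 * d (discSumEquiv M N r).2 where
  gaussPhase_eq r hr := by
    rw [← hc.gaussPhase_eq _ (left_ne_zero_of_mul hr), ← hd.gaussPhase_eq _
      (right_ne_zero_of_mul hr), Fintype.prod_sum_type]
    rfl
  discFourier_eq u := by
    have hprod : discFourier (fun r => c (discSumEquiv M N r).1 * d (discSumEquiv M N r).2) u =
        discFourier c (discSumEquiv M N u).1 * discFourier d (discSumEquiv M N u).2 := by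
      simp only [discFourier]
      rw [Fintype.sum_mul_sum, ← Fintype.sum_prod_type']
      refine Fintype.sum_equiv (discSumEquiv M N) _ _ fun r => ?_
      rw [Fintype.prod_sum_type, ← mul_mul_mul_comm]
      rfl
    rw [hprod, hc.discFourier_eq, hd.discFourier_eq, Fintype.prod_sum_type]
    simp only [Sum.elim_inl, Sum.elim_inr]
    ring

end IsWeilEigenvector

/-- Some even lattice of rank `n` with diagonal Gram matrix has a nonzero eigenvector of its Weil
representation with eigenvalues `t` and `s`. -/
def HasWeilEigenvector (n : ℕ) (t s : ℂ) : Prop :=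
  ∃ (N : Fin n → ℕ) (_ : ∀ i, NeZero (N i)) (c : (∀ i, ZMod (N i)) → ℂ),
    (∀ i, Even (N i)) ∧ c ≠ 0 ∧ IsWeilEigenvector N t s c

theorem HasWeilEigenvector.mul {m n : ℕ} (hm : HasWeilEigenvector m t s)
    (hn : HasWeilEigenvector n t' s') : HasWeilEigenvector (m + n) (t * t') (s * s') := by
  obtain ⟨M, _, c, hM, hc0, hc⟩ := hm
  obtain ⟨N, _, d, hN, hd0, hd⟩ := hn
  obtain ⟨a, ha⟩ := Function.ne_iff.1 hc0
  obtain ⟨b, hb⟩ := Function.ne_iff.1 hd0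
  refine ⟨_, fun _ => inferInstance, _, fun i => ?_, ?_,
    (hc.tensor hd).reindex finSumFinEquiv.symm⟩
  · cases finSumFinEquiv.symm i with
    | inl i => exact hM i
    | inr j => exact hN j
  · refine Function.ne_iff.2 ⟨(Equiv.piCongrLeft (fun i => ZMod (Sum.elim M N i))
      finSumFinEquiv.symm).symm ((discSumEquiv M N).symm (a, b)), ?_⟩
    simpa only [Equiv.apply_symm_apply, Pi.zero_apply] using mul_ne_zero ha hb

end TensorProduct

section Blocks

variable {t s : ℂ}

theorem hasWeilEigenvector_one_of {N : ℕ} [NeZero N] (hN : Even N) {c : ZMod N → ℂ} (hc : c ≠ 0)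
    (hphase : ∀ r, c r ≠ 0 → gaussPhase N r = t)
    (hfourier : ∀ u, ∑ r, c r * ZMod.stdAddChar (-(r * u)) = s * √N * c u) :
    HasWeilEigenvector 1 t s := by
  obtain ⟨a, ha⟩ := Function.ne_iff.1 hc
  refine ⟨fun _ => N, fun _ => inferInstance, fun r => c (r 0), fun _ => hN,
    Function.ne_iff.2 ⟨fun _ => a, ha⟩, fun r hr => ?_, fun u => ?_⟩
  · simpa using hphase _ hr
  · simp only [Fin.prod_univ_one]
    rw [← hfourier, discFourier]
    exact Fintype.sum_equiv (Equiv.funUnique (Fin 1) (ZMod N)) _ _ fun r => by simp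

theorem hasWeilEigenvector_two_of {M N : ℕ} [hM0 : NeZero M] [hN0 : NeZero N] (hM : Even M)
    (hN : Even N) {c : ZMod M × ZMod N → ℂ} (hc : c ≠ 0)
    (hphase : ∀ r, c r ≠ 0 → gaussPhase M r.1 * gaussPhase N r.2 = t)
    (hfourier : ∀ u, ∑ r, c r * (ZMod.stdAddChar (-(r.1 * u.1)) * ZMod.stdAddChar (-(r.2 * u.2))) =
      s * (√M * √N) * c u) :
    HasWeilEigenvector 2 t s := by
  obtain ⟨a, ha⟩ := Function.ne_iff.1 hc
  let e : (∀ i, ZMod (![M, N] i)) ≃ ZMod M × ZMod N := piFinTwoEquiv fun i => ZMod (![M, N] i)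
  have hMN : ∀ i, NeZero (![M, N] i) := Fin.forall_fin_two.2 ⟨hM0, hN0⟩
  refine ⟨![M, N], hMN, fun r => c (e r),
    Fin.forall_fin_two.2 ⟨hM, hN⟩, Function.ne_iff.2 ⟨e.symm a, ?_⟩, fun r hr => ?_, fun u => ?_⟩
  · simpa only [e.apply_symm_apply, Pi.zero_apply] using ha
  · rw [← hphase (e r) hr, Fin.prod_univ_two]
    rfl
  · rw [Fin.prod_univ_two]
    refine Eq.trans ?_ (hfourier (e u))
    refine Fintype.sum_equiv e _ _ fun r => ?_
    rw [Fin.prod_univ_two]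
    rfl

theorem stdAddChar_natCast {N : ℕ} [NeZero N] (m : ℕ) :
    ZMod.stdAddChar (m : ZMod N) = exp (2 * π * I / N) ^ m := by
  rw [← exp_nat_mul, ← Int.cast_natCast, ZMod.stdAddChar_coe, Int.cast_natCast]
  ring_nf

theorem stdAddChar_neg_mul_natCast {N : ℕ} [NeZero N] (a : ZMod N) (m : ℕ) :
    ZMod.stdAddChar (-(a * (m : ZMod N))) = exp (2 * π * I / N) ^ ((-a).val * m % N) := by
  rw [← stdAddChar_natCast]
  simp

theorem exp_two_pi_I_mul_eq_of_eq_add_intCast {x y : ℂ} (m : ℤ) (h : x = y + m) :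
    exp (2 * π * I * x) = exp (2 * π * I * y) :=
  exp_eq_exp_iff_exists_int.2 ⟨m, by rw [h]; ring⟩

end Blocks

section Eigenvectors

theorem sqrt_three_sq : (√3 : ℂ) ^ 2 = 3 := by
  rw [← ofReal_pow, Real.sq_sqrt zero_le_three, ofReal_ofNat]

theorem exp_two_pi_I_div_four : exp (2 * π * I / (4 : ℕ)) = I := by
  rw [show 2 * π * I / (4 : ℕ) = π / 2 * I by push_cast; ring, exp_pi_div_two_mul_I]

theorem exp_two_pi_I_div_six : exp (2 * π * I / (6 : ℕ)) = (1 + √3 * I) / 2 := by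
  rw [show 2 * π * I / (6 : ℕ) = (π / 3 : ℝ) * I by push_cast; ring, exp_mul_I, ← ofReal_cos,
    ← ofReal_sin, Real.cos_pi_div_three, Real.sin_pi_div_three]
  push_cast
  ring

theorem exp_two_pi_I_div_twelve : exp (2 * π * I / (12 : ℕ)) = (√3 + I) / 2 := by
  rw [show 2 * π * I / (12 : ℕ) = (π / 6 : ℝ) * I by push_cast; ring, exp_mul_I, ← ofReal_cos,
    ← ofReal_sin, Real.cos_pi_div_six, Real.sin_pi_div_six]
  push_cast
  ring

/-- The odd quadratic character modulo `4`. Its theta function is Jacobi's odd `ϑ(τ, 2z)`. -/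
def oddCharFour : ZMod 4 → ℂ :=
  Pi.single 1 1 - Pi.single 3 1

/-- The even primitive quadratic character modulo `12`. Its theta function is the one of the
quintuple product identity, with `η` as value at `z = 0`. -/
def evenCharTwelve : ZMod 12 → ℂ :=
  Pi.single 1 1 - Pi.single 5 1 - Pi.single 7 1 + Pi.single 11 1

/-- The odd function on the discriminant group `ℤ/3` of the root lattice `A₂`, seen on the
discriminant group of the sublattice `⟨2⟩ ⊕ ⟨6⟩` of index two. -/
def oddCharATwo : ZMod 2 × ZMod 6 → ℂ :=
  Pi.single (0, 4) 1 - Pi.single (0, 2) 1 + Pi.single (1, 1) 1 - Pi.single (1, 5) 1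

theorem gaussPhase_of_oddCharFour_ne_zero {r : ZMod 4} (hr : oddCharFour r ≠ 0) :
    gaussPhase 4 r = exp (2 * π * I * (1 / 8)) := by
  have hsupp : r = 1 ∨ r = 3 := by
    by_contra! h
    simp [oddCharFour, h] at hr
  rcases hsupp with rfl | rfl
  · refine exp_two_pi_I_mul_eq_of_eq_add_intCast 0 ?_
    norm_num [show (1 : ZMod 4).val = 1 from rfl]
  · refine exp_two_pi_I_mul_eq_of_eq_add_intCast 1 ?_
    norm_num [show (3 : ZMod 4).val = 3 from rfl]

theorem gaussPhase_of_evenCharTwelve_ne_zero {r : ZMod 12} (hr : evenCharTwelve r ≠ 0) :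
    gaussPhase 12 r = exp (2 * π * I * (1 / 24)) := by
  have hsupp : r = 1 ∨ r = 5 ∨ r = 7 ∨ r = 11 := by
    by_contra! h
    simp [evenCharTwelve, h] at hr
  rcases hsupp with rfl | rfl | rfl | rfl
  · refine exp_two_pi_I_mul_eq_of_eq_add_intCast 0 ?_
    norm_num [show (1 : ZMod 12).val = 1 from rfl]
  · refine exp_two_pi_I_mul_eq_of_eq_add_intCast 1 ?_
    norm_num [show (5 : ZMod 12).val = 5 from rfl]
  · refine exp_two_pi_I_mul_eq_of_eq_add_intCast 2 ?_
    norm_num [show (7 : ZMod 12).val = 7 from rfl]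
  · refine exp_two_pi_I_mul_eq_of_eq_add_intCast 5 ?_
    norm_num [show (11 : ZMod 12).val = 11 from rfl]

theorem gaussPhase_mul_of_oddCharATwo_ne_zero {r : ZMod 2 × ZMod 6} (hr : oddCharATwo r ≠ 0) :
    gaussPhase 2 r.1 * gaussPhase 6 r.2 = exp (2 * π * I * (1 / 3)) := by
  have hsupp : r = (0, 4) ∨ r = (0, 2) ∨ r = (1, 1) ∨ r = (1, 5) := by
    by_contra! h
    simp [oddCharATwo, h] at hr
  rw [gaussPhase, gaussPhase, ← exp_add, ← mul_add]
  rcases hsupp with rfl | rfl | rfl | rfl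
  · refine exp_two_pi_I_mul_eq_of_eq_add_intCast 1 ?_
    norm_num [show (0 : ZMod 2).val = 0 from rfl, show (4 : ZMod 6).val = 4 from rfl]
  · refine exp_two_pi_I_mul_eq_of_eq_add_intCast 0 ?_
    norm_num [show (0 : ZMod 2).val = 0 from rfl, show (2 : ZMod 6).val = 2 from rfl]
  · refine exp_two_pi_I_mul_eq_of_eq_add_intCast 0 ?_
    norm_num [show (1 : ZMod 2).val = 1 from rfl, show (1 : ZMod 6).val = 1 from rfl]
  · refine exp_two_pi_I_mul_eq_of_eq_add_intCast 2 ?_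
    norm_num [show (1 : ZMod 2).val = 1 from rfl, show (5 : ZMod 6).val = 5 from rfl]

theorem sum_oddCharFour_mul_stdAddChar (u : ZMod 4) :
    ∑ r, oddCharFour r * ZMod.stdAddChar (-(r * u)) = -I * √(4 : ℕ) * oddCharFour u := by
  obtain ⟨m, hm, rfl⟩ : ∃ m : ℕ, m < 4 ∧ (m : ZMod 4) = u :=
    ⟨u.val, ZMod.val_lt u, ZMod.natCast_zmod_val u⟩
  have hsqrt : √(4 : ℕ) = 2 := by
    rw [show ((4 : ℕ) : ℝ) = 2 ^ 2 by norm_num, Real.sqrt_sq zero_le_two]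
  simp only [oddCharFour, Pi.sub_apply, sub_mul, Finset.sum_sub_distrib, Pi.single_apply, ite_mul,
    one_mul, zero_mul, Finset.sum_ite_eq', Finset.mem_univ, if_true, stdAddChar_neg_mul_natCast,
    exp_two_pi_I_div_four, hsqrt, show (-1 : ZMod 4).val = 3 from rfl,
    show (-3 : ZMod 4).val = 1 from rfl]
  have hI := I_sq
  push_cast
  interval_cases m <;> simp +decide only [Nat.reduceMul, Nat.reduceMod, if_true, if_false] <;> grind

theorem sum_evenCharTwelve_mul_stdAddChar (u : ZMod 12) :
    ∑ r, evenCharTwelve r * ZMod.stdAddChar (-(r * u)) = 1 * √(12 : ℕ) * evenCharTwelve u := by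
  obtain ⟨m, hm, rfl⟩ : ∃ m : ℕ, m < 12 ∧ (m : ZMod 12) = u :=
    ⟨u.val, ZMod.val_lt u, ZMod.natCast_zmod_val u⟩
  have hsqrt : √(12 : ℕ) = 2 * √3 := by
    rw [show ((12 : ℕ) : ℝ) = 2 ^ 2 * 3 by norm_num, Real.sqrt_mul (by norm_num),
      Real.sqrt_sq zero_le_two]
  obtain ⟨ζ, hζ⟩ : ∃ ζ, ζ = exp (2 * π * I / (12 : ℕ)) := ⟨_, rfl⟩
  obtain ⟨hcyclotomic, hsqrt_three⟩ : ζ ^ 4 = ζ ^ 2 - 1 ∧ (√3 : ℂ) = 2 * ζ - ζ ^ 3 := by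
    have hI := I_sq
    have h3 := sqrt_three_sq
    have hroot := hζ.trans exp_two_pi_I_div_twelve
    constructor <;> grind
  simp only [evenCharTwelve, Pi.sub_apply, Pi.add_apply, sub_mul, add_mul, Finset.sum_add_distrib,
    Finset.sum_sub_distrib, Pi.single_apply, ite_mul, one_mul, zero_mul, Finset.sum_ite_eq',
    Finset.mem_univ, if_true, stdAddChar_neg_mul_natCast, ← hζ, hsqrt, ofReal_mul, hsqrt_three,
    show (-1 : ZMod 12).val = 11 from rfl, show (-5 : ZMod 12).val = 7 from rfl,
    show (-7 : ZMod 12).val = 5 from rfl, show (-11 : ZMod 12).val = 1 from rfl]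
  clear hζ hsqrt_three
  push_cast
  interval_cases m <;> simp +decide only [Nat.reduceMul, Nat.reduceMod, if_true, if_false] <;> grind

theorem sum_oddCharATwo_mul_stdAddChar (u : ZMod 2 × ZMod 6) :
    ∑ r, oddCharATwo r * (ZMod.stdAddChar (-(r.1 * u.1)) * ZMod.stdAddChar (-(r.2 * u.2))) =
      I * (√(2 : ℕ) * √(6 : ℕ)) * oddCharATwo u := by
  obtain ⟨m, n, hm, hn, rfl⟩ : ∃ m n : ℕ, m < 2 ∧ n < 6 ∧ ((m : ZMod 2), (n : ZMod 6)) = u :=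
    ⟨u.1.val, u.2.val, ZMod.val_lt _, ZMod.val_lt _,
      Prod.ext (ZMod.natCast_zmod_val _) (ZMod.natCast_zmod_val _)⟩
  have hsqrt : √(2 : ℕ) * √(6 : ℕ) = 2 * √3 := by
    rw [← Real.sqrt_mul (by norm_num), show ((2 : ℕ) * (6 : ℕ) : ℝ) = 2 ^ 2 * 3 by norm_num,
      Real.sqrt_mul (by norm_num), Real.sqrt_sq zero_le_two]
  have htwo : exp (2 * π * I / (2 : ℕ)) = -1 := by
    rw [← exp_pi_mul_I]
    push_cast
    ring_nf
  obtain ⟨ζ, hζ⟩ : ∃ ζ, ζ = exp (2 * π * I / (6 : ℕ)) := ⟨_, rfl⟩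
  obtain ⟨hcyclotomic, hsqrt_three⟩ : ζ ^ 2 = ζ - 1 ∧ I * (2 * √3 : ℂ) = 2 * (2 * ζ - 1) := by
    have hI := I_sq
    have h3 := sqrt_three_sq
    have hroot := hζ.trans exp_two_pi_I_div_six
    constructor <;> grind
  simp only [oddCharATwo, Pi.sub_apply, Pi.add_apply, sub_mul, add_mul, Finset.sum_add_distrib,
    Finset.sum_sub_distrib, Pi.single_apply, ite_mul, one_mul, zero_mul, Finset.sum_ite_eq',
    Finset.mem_univ, if_true, stdAddChar_neg_mul_natCast, ← hζ, htwo, ← ofReal_mul, hsqrt,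
    show (-0 : ZMod 2).val = 0 from rfl, show (-1 : ZMod 2).val = 1 from rfl,
    show (-1 : ZMod 6).val = 5 from rfl, show (-2 : ZMod 6).val = 4 from rfl,
    show (-4 : ZMod 6).val = 2 from rfl, show (-5 : ZMod 6).val = 1 from rfl]
  push_cast
  rw [hsqrt_three]
  clear hζ hsqrt_three hsqrt htwo
  interval_cases m <;> interval_cases n <;>
    simp +decide only [Nat.reduceMul, Nat.reduceMod, if_true, if_false] <;> grind

theorem hasWeilEigenvector_oddCharFour : HasWeilEigenvector 1 (exp (2 * π * I * (1 / 8))) (-I) :=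
  hasWeilEigenvector_one_of (by decide) (Function.ne_iff.2 ⟨1, by simp +decide [oddCharFour]⟩)
    (fun _ => gaussPhase_of_oddCharFour_ne_zero) sum_oddCharFour_mul_stdAddChar

theorem hasWeilEigenvector_evenCharTwelve :
    HasWeilEigenvector 1 (exp (2 * π * I * (1 / 24))) 1 :=
  hasWeilEigenvector_one_of (by decide) (Function.ne_iff.2 ⟨1, by simp +decide [evenCharTwelve]⟩)
    (fun _ => gaussPhase_of_evenCharTwelve_ne_zero) sum_evenCharTwelve_mul_stdAddChar

theorem hasWeilEigenvector_oddCharATwo : HasWeilEigenvector 2 (exp (2 * π * I * (1 / 3))) I :=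
  hasWeilEigenvector_two_of (by decide) (by decide)
    (Function.ne_iff.2 ⟨(1, 1), by simp +decide [oddCharATwo]⟩)
    (fun _ => gaussPhase_mul_of_oddCharATwo_ne_zero) sum_oddCharATwo_mul_stdAddChar

theorem hasWeilEigenvector_four : HasWeilEigenvector 4 (exp (2 * π * I * (1 / 3))) (I ^ 2) := by
  have h := (hasWeilEigenvector_evenCharTwelve.mul hasWeilEigenvector_evenCharTwelve).mul
    (hasWeilEigenvector_oddCharFour.mul hasWeilEigenvector_oddCharFour)
  simp only [← exp_add, ← mul_add] at h
  convert h using 1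
  · norm_num
  · simp [sq]

theorem hasWeilEigenvector_of_three {m n p : ℕ} {s s' s'' : ℂ}
    (hm : HasWeilEigenvector m (exp (2 * π * I * (1 / 3))) s)
    (hn : HasWeilEigenvector n (exp (2 * π * I * (1 / 3))) s')
    (hp : HasWeilEigenvector p (exp (2 * π * I * (1 / 3))) s'') :
    HasWeilEigenvector (m + n + p) 1 (s * s' * s'') := by
  have h := (hm.mul hn).mul hp
  simp only [← exp_add, ← mul_add] at h
  convert h
  rw [← exp_two_pi_mul_I]
  norm_num

theorem hasWeilEigenvector_two_mul {k : ℕ} (hk : 3 ≤ k) : HasWeilEigenvector (2 * k) 1 (I ^ k) := by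
  have hsix : HasWeilEigenvector 6 1 (I * I * I) := hasWeilEigenvector_of_three
    hasWeilEigenvector_oddCharATwo hasWeilEigenvector_oddCharATwo hasWeilEigenvector_oddCharATwo
  have height : HasWeilEigenvector 8 1 (I * I * I ^ 2) := hasWeilEigenvector_of_three
    hasWeilEigenvector_oddCharATwo hasWeilEigenvector_oddCharATwo hasWeilEigenvector_four
  have hten : HasWeilEigenvector 10 1 (I * I ^ 2 * I ^ 2) := hasWeilEigenvector_of_three
    hasWeilEigenvector_oddCharATwo hasWeilEigenvector_four hasWeilEigenvector_four
  induction k using Nat.strong_induction_on with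
  | _ k ih =>
    obtain rfl | rfl | rfl | hk6 : k = 3 ∨ k = 4 ∨ k = 5 ∨ 6 ≤ k := by omega
    · exact (by ring : I * I * I = I ^ 3) ▸ hsix
    · exact (by ring : I * I * I ^ 2 = I ^ 4) ▸ height
    · exact (by ring : I * I ^ 2 * I ^ 2 = I ^ 5) ▸ hten
    · obtain ⟨j, rfl⟩ := Nat.exists_eq_add_of_le' (show 3 ≤ k by omega)
      have h := (ih j (by omega) (by omega)).mul hsix
      rwa [one_mul, show I ^ j * (I * I * I) = I ^ (j + 3) by ring] at h

end Eigenvectors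

/-- For every even `n ≥ 6` there is an even positive definite lattice of
rank `n` carrying a nonzero holomorphic Jacobi form of singular weight `n/2` and index `1`
with completely trivial character (and with integral Fourier support `n ∈ ℤ`, `l ∈ L^∨`). -/
theorem statement19 (n : ℕ) (hn : 6 ≤ n) (heven : Even n) :
    ∃ S : Matrix (Fin n) (Fin n) ℤ, IsEvenPosDef S ∧
      ∃ (f : ℚ × (Fin n → ℚ) → ℂ) (φ : ℂ → (Fin n → ℂ) → ℂ),
        IsJacobiForm S ((n : ℚ) / 2) 1 (fun _ => 1) (fun _ _ => 1) f φ ∧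
        (∀ p, f p ≠ 0 → (∃ z : ℤ, p.1 = (z : ℚ)) ∧
          ∀ x : Fin n → ℤ, ∃ m : ℤ, bilinQ S p.2 (fun i => (x i : ℚ)) = m) ∧
        ∃ (τ : ℂ) (z : Fin n → ℂ), 0 < τ.im ∧ φ τ z ≠ 0 := by
  obtain ⟨m, rfl⟩ := even_iff_exists_two_mul.1 heven
  obtain ⟨N, _, c, hN, hc0, hc⟩ := hasWeilEigenvector_two_mul (show 3 ≤ m by omega)
  refine ⟨diagGram N, isEvenPosDef_diagGram hN, discCoeff c, discTheta c, ?_, fun p hp => ?_, ?_⟩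
  · rw [show ((2 * m : ℕ) : ℚ) / 2 = m by push_cast; ring]
    exact hc.isJacobiForm (Fintype.card_fin _) hN
  · obtain ⟨l, rfl, hl⟩ := exists_fourierIndex_eq_of_discCoeff_ne_zero hp
    exact ⟨exists_intCast_eq_fourierIndex_fst hN (hc.gaussPhase_eq _ hl),
      exists_intCast_eq_bilinQ_fourierIndex l⟩
  · obtain ⟨z, hz⟩ := exists_discTheta_ne_zero hc0
    exact ⟨I, z, by simp, hz⟩
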